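/- Let X and Y be locally compact Hausdorff spaces and let T : C₀(X,ℝ)⁺ → C₀(Y,ℝ)⁺ be a surjective isometry. Then there exists a homeomorphism φ : Y → X such that T(f)(y) = f(φ(y)) for all f ∈ C₀(X,ℝ)⁺ and all y ∈ Y. -/

import Mathlib

/-!
A point of `Y` can be read off from the metric of the cone. Fix `y : Y` and finitely many
`f i` in the cone of `X`. For `N` large there is `k` in the cone of `Y` with `k y = ‖k‖ = N` and
`‖k - T (f i)‖ ≤ N - T (f i) y` for all `i` at once (`exists_simultaneous_peak`). Pull `k` back
along `T` to `k'`: since `T 0 = 0`, also `‖k'‖ = N`, and `k'` attains its norm at some `x`. There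
`f i x ≥ k' x - ‖k' - f i‖ ≥ T (f i) y` for every `i`. By compactness a single `x` satisfies
`T f y ≤ f x` for all `f` (`exists_point`). Applying the same to the inverse of `T` gives `y'`
with `f x ≤ T f y'` for all `f`. As `T` is surjective and the cone of `Y` separates points,
`y' = y`, hence `T f y = f x`.

That `T 0 = 0` is again metric: `0` is the only point `p` of the cone all of whose closed balls
of radius `r` have diameter at most `r`; for `p ≠ 0` the points `0` and `2 p` are at distance
`‖p‖` from `p` and at distance `2 ‖p‖` from each other.

The map `y ↦ x` and the analogous map for the inverse of `T` are mutually inverse, and they are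
continuous because the cone functions induce the topology of a locally compact Hausdorff space.
-/

open scoped ZeroAtInfty

/-- The positive cone of `C₀(X, ℝ)`: all nonnegative functions. -/
def PosCone (X : Type*) [TopologicalSpace X] : Type _ :=
  {f : C₀(X, ℝ) // ∀ x, 0 ≤ f x}

namespace PosCone

variable {X : Type*} [TopologicalSpace X]

/-- The underlying `C₀` function of an element of the positive cone. -/
noncomputable instance : CoeOut (PosCone X) C₀(X, ℝ) := ⟨Subtype.val⟩

/-- The zero function, as an element of the positive cone. -/
noncomputable instance : Zero (PosCone X) := ⟨⟨0, fun x => by simp⟩⟩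

end PosCone

/-- The peak set `P_x`: all nonzero nonnegative functions attaining their norm at `x`. -/
def Peak {X : Type*} [TopologicalSpace X] (x : X) : Set (PosCone X) :=
  {f | (f : C₀(X, ℝ)) ≠ 0 ∧ (f : C₀(X, ℝ)) x = ‖(f : C₀(X, ℝ))‖}

/-- `M(f)`: the set of points where `f` attains its norm. -/
def MaxSet {X : Type*} [TopologicalSpace X] (f : C₀(X, ℝ)) : Set X :=
  {x | f x = ‖f‖}

/-- The sum of finitely many elements of the positive cone. -/
noncomputable def sumCone {Y : Type*} [TopologicalSpace Y] {n : ℕ}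
    (u : Fin n → PosCone Y) : PosCone Y :=
  ⟨∑ k, (u k : C₀(Y, ℝ)), fun y => by
    have h : (∑ k, (u k : C₀(Y, ℝ))) y = ∑ k, (u k : C₀(Y, ℝ)) y := by
      refine map_sum ((Pi.evalAddMonoidHom (fun _ : Y => ℝ) y).comp
        ⟨⟨fun f : C₀(Y, ℝ) => ⇑f, ZeroAtInftyContinuousMap.coe_zero⟩,
          ZeroAtInftyContinuousMap.coe_add⟩) _ _
    rw [h]
    exact Finset.sum_nonneg fun k _ => (u k).2 y⟩

namespace PosCone

/-! ### Peaks and separation of points in the positive cone -/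

section Space

variable {X : Type*} [TopologicalSpace X]

theorem abs_apply_le (f : C₀(X, ℝ)) (x : X) : |f x| ≤ ‖f‖ := by
  have h := f.toBCF.norm_coe_le_norm x
  rw [ZeroAtInftyContinuousMap.norm_toBCF_eq_norm] at h
  exact h

theorem norm_le_of_forall {f : C₀(X, ℝ)} {C : ℝ} (hC : 0 ≤ C) (h : ∀ x, |f x| ≤ C) :
    ‖f‖ ≤ C := by
  rw [← ZeroAtInftyContinuousMap.norm_toBCF_eq_norm]
  exact (BoundedContinuousFunction.norm_le hC).2 h

theorem exists_apply_eq_norm (k : PosCone X) (hk : 0 < ‖k.1‖) : ∃ x, k.1 x = ‖k.1‖ := by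
  obtain ⟨x₀, hx₀⟩ : ∃ x, 0 < k.1 x := by
    by_contra! h
    have : ‖k.1‖ ≤ 0 := norm_le_of_forall le_rfl fun x => by
      rw [abs_of_nonneg (k.2 x)]
      exact h x
    linarith
  have hev : ∀ᶠ x in Filter.cocompact X, k.1 x ≤ k.1 x₀ :=
    ((zero_at_infty k.1).eventually_lt_const hx₀).mono fun _ => le_of_lt
  obtain ⟨x, hx⟩ := (map_continuous k.1).exists_forall_ge' x₀ hev
  refine ⟨x, le_antisymm ((le_abs_self _).trans (abs_apply_le _ _)) ?_⟩
  refine norm_le_of_forall (k.2 x) fun z => ?_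
  rw [abs_of_nonneg (k.2 z)]
  exact hx z

theorem exists_bump [LocallyCompactSpace X] [T2Space X] {U : Set X} (hU : IsOpen U) {x : X}
    (hx : x ∈ U) :
    ∃ w : PosCone X, w.1 x = 1 ∧ (∀ z, w.1 z ≤ 1) ∧ ∀ z, z ∉ U → w.1 z = 0 := by
  obtain ⟨w, h1, h0, hc, hI⟩ := exists_continuous_one_zero_of_isCompact
    (isCompact_singleton (x := x)) hU.isClosed_compl (Set.disjoint_singleton_left.2 fun h => h hx)
  exact ⟨⟨⟨w, hc.is_zero_at_infty⟩, fun z => (hI z).1⟩, h1 rfl, fun z => (hI z).2,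
    fun z hz => h0 hz⟩

/-- The functions in the positive cone induce the topology of a locally compact Hausdorff
space. -/
theorem continuous_of_comp [LocallyCompactSpace X] [T2Space X] {Z : Type*} [TopologicalSpace Z]
    {φ : Z → X} (h : ∀ f : PosCone X, Continuous fun z => f.1 (φ z)) : Continuous φ := by
  refine continuous_iff_continuousAt.2 fun z => ?_
  intro V hV
  obtain ⟨U, hUV, hU, hzU⟩ := mem_nhds_iff.1 hV
  obtain ⟨w, hw1, -, hw0⟩ := exists_bump hU hzU
  have hpos : ∀ᶠ z' in nhds z, 0 < w.1 (φ z') :=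
    (h w).continuousAt.eventually_const_lt (by simp [hw1])
  refine Filter.mem_map.2 (hpos.mono fun z' hz' => ?_)
  by_contra hn
  exact hz'.ne' (hw0 _ fun hm => hn (hUV hm))

/-- Finitely many elements of the cone admit a common large function `k` peaking at `y` whose
distance to each of them is already realized at `y`. -/
theorem exists_simultaneous_peak [LocallyCompactSpace X] [T2Space X] (y : X)
    (s : Finset (PosCone X)) :
    ∃ k : PosCone X, 0 < ‖k.1‖ ∧ ∀ g ∈ s, ‖k.1 - g.1‖ ≤ ‖k.1‖ - g.1 y := by
  obtain ⟨w, hw1, hwle, -⟩ := exists_bump isOpen_univ (Set.mem_univ y)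
  -- `N ≥ 2 ‖g‖` guarantees `g ≤ ‖g‖ ≤ N - g y`; the summand `1` makes `N` positive.
  set N : ℝ := 1 + 2 * ∑ g ∈ s, ‖g.1‖ with hN
  have hN0 : 0 < N := by positivity
  have hNg : ∀ g ∈ s, 2 * ‖g.1‖ ≤ N := fun g hg => by
    have : ‖g.1‖ ≤ ∑ g ∈ s, ‖g.1‖ :=
      Finset.single_le_sum (f := fun g : PosCone X => ‖g.1‖) (fun _ _ => norm_nonneg _) hg
    linarith
  let D : X → ℝ := fun z => ∑ g ∈ s, |g.1 z - g.1 y|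
  have hD0 : ∀ z, 0 ≤ D z := fun z => Finset.sum_nonneg fun _ _ => abs_nonneg _
  have hDg : ∀ g ∈ s, ∀ z, |g.1 z - g.1 y| ≤ D z := fun g hg z =>
    Finset.single_le_sum (f := fun g : PosCone X => |g.1 z - g.1 y|)
      (fun _ _ => abs_nonneg _) hg
  have hDy : D y = 0 := by simp [D]
  have hDc : Continuous D :=
    continuous_finsetSum _ fun g _ => ((map_continuous g.1).sub continuous_const).abs
  have hwc : Continuous fun z => N * w.1 z := continuous_const.mul (map_continuous w.1)
  let κ : X → ℝ := fun z => max 0 (N * w.1 z - D z)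
  have hκ0 : ∀ z, 0 ≤ κ z := fun z => le_max_left _ _
  have hκw : ∀ z, κ z ≤ N * w.1 z := fun z =>
    max_le (mul_nonneg hN0.le (w.2 z)) (by linarith [hD0 z])
  have hNw : ∀ z, N * w.1 z ≤ N := fun z => by nlinarith [hwle z]
  have hκlim : Filter.Tendsto κ (Filter.cocompact X) (nhds 0) :=
    squeeze_zero hκ0 hκw (by simpa using (zero_at_infty w.1).const_mul N)
  let k : PosCone X := ⟨⟨⟨κ, continuous_const.max (hwc.sub hDc)⟩, hκlim⟩, hκ0⟩
  have hky : k.1 y = N := by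
    change max 0 (N * w.1 y - D y) = N
    rw [hw1, hDy, mul_one, sub_zero, max_eq_right hN0.le]
  have hkN : ‖k.1‖ = N := by
    refine le_antisymm (norm_le_of_forall hN0.le fun z => ?_) ?_
    · rw [abs_of_nonneg (k.2 z)]
      exact (hκw z).trans (hNw z)
    · rw [← hky]
      exact (le_abs_self _).trans (abs_apply_le _ _)
  refine ⟨k, hkN ▸ hN0, fun g hg => ?_⟩
  have hgn : ∀ z, g.1 z ≤ ‖g.1‖ := fun z => (le_abs_self _).trans (abs_apply_le _ _)
  rw [hkN]
  refine norm_le_of_forall (by linarith [hNg g hg, hgn y, g.2 y, (g.2 y).trans (hgn y)])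
    fun z => ?_
  change |κ z - g.1 z| ≤ N - g.1 y
  have h1 := hNg g hg
  rw [abs_le]
  constructor
  · linarith [hκ0 z, hgn z, hgn y]
  · have h2 := neg_le_of_abs_le (hDg g hg z)
    have : κ z ≤ N - g.1 y + g.1 z :=
      max_le (by linarith [g.2 z, g.2 y, hgn y]) (by linarith [hNw z])
    linarith

theorem eq_of_forall_le [LocallyCompactSpace X] [T2Space X] {y y' : X}
    (h : ∀ g : PosCone X, g.1 y ≤ g.1 y') : y = y' := by
  by_contra hne
  obtain ⟨w, hw1, -, hw0⟩ := exists_bump (isOpen_compl_singleton (x := y')) (x := y) hne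
  have := h w
  rw [hw1, hw0 y' (by simp)] at this
  linarith

end Space

/-! ### Corresponding points under a surjective isometry -/

section Isometry

variable {X Y : Type*} [TopologicalSpace X] [TopologicalSpace Y] {T : PosCone X → PosCone Y}

/-- `0` is the only point of the cone all of whose closed balls of radius `r` have diameter at
most `r`, so a surjective isometry fixes it. -/
theorem map_zero_val (hsurj : Function.Surjective T)
    (hiso : ∀ f g : PosCone X, ‖(T f).1 - (T g).1‖ = ‖f.1 - g.1‖) : (T 0).1 = 0 := by
  set p := T 0 with hp
  obtain ⟨f, hf⟩ := hsurj 0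
  obtain ⟨g, hg⟩ := hsurj ⟨p.1 + p.1, fun x => add_nonneg (p.2 x) (p.2 x)⟩
  have z : (0 : PosCone X).1 = 0 := rfl
  have z' : (0 : PosCone Y).1 = 0 := rfl
  have hf' : ‖p.1‖ = ‖f.1‖ := by
    have := hiso 0 f
    rwa [hf, ← hp, z, z', sub_zero, zero_sub, norm_neg] at this
  have hg' : ‖p.1‖ = ‖g.1‖ := by
    have := hiso g 0
    rwa [hg, ← hp, z, sub_zero, add_sub_cancel_right] at this
  have hfg : ‖p.1 + p.1‖ = ‖g.1 - f.1‖ := by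
    have := hiso g f
    rwa [hf, hg, z', sub_zero] at this
  -- Two nonnegative functions of norm at most `r` are at distance at most `r`.
  have hle : ‖g.1 - f.1‖ ≤ ‖p.1‖ := by
    refine norm_le_of_forall (norm_nonneg _) fun x => ?_
    have h1 := (le_abs_self _).trans (abs_apply_le f.1 x)
    have h2 := (le_abs_self _).trans (abs_apply_le g.1 x)
    rw [ZeroAtInftyContinuousMap.sub_apply, abs_le]
    constructor <;> linarith [f.2 x, g.2 x]
  rw [← hfg, ← two_smul ℝ, norm_smul, Real.norm_ofNat] at hle
  exact norm_le_zero_iff.1 (by linarith)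

theorem norm_map (hsurj : Function.Surjective T)
    (hiso : ∀ f g : PosCone X, ‖(T f).1 - (T g).1‖ = ‖f.1 - g.1‖) (f : PosCone X) :
    ‖(T f).1‖ = ‖f.1‖ := by
  have := hiso f 0
  rwa [map_zero_val hsurj hiso, sub_zero, show (0 : PosCone X).1 = 0 from rfl, sub_zero] at this

theorem exists_point_finset [LocallyCompactSpace Y] [T2Space Y] (hsurj : Function.Surjective T)
    (hiso : ∀ f g : PosCone X, ‖(T f).1 - (T g).1‖ = ‖f.1 - g.1‖) (y : Y)
    (s : Finset (PosCone X)) : ∃ x, ∀ f ∈ s, (T f).1 y ≤ f.1 x := by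
  classical
  obtain ⟨k, hk0, hk⟩ := exists_simultaneous_peak y (s.image T)
  obtain ⟨k', rfl⟩ := hsurj k
  rw [norm_map hsurj hiso] at hk0 hk
  obtain ⟨x, hx⟩ := exists_apply_eq_norm k' hk0
  refine ⟨x, fun f hf => ?_⟩
  have h1 := hk (T f) (Finset.mem_image_of_mem T hf)
  rw [hiso] at h1
  have h2 := (le_abs_self _).trans (abs_apply_le (k'.1 - f.1) x)
  rw [ZeroAtInftyContinuousMap.sub_apply] at h2
  linarith

/-- The finite version passes to the whole cone by compactness: the sets `{x | T f y ≤ f x}` are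
closed, and compact as soon as `T f y > 0`. -/
theorem exists_point [LocallyCompactSpace Y] [T2Space Y] (hsurj : Function.Surjective T)
    (hiso : ∀ f g : PosCone X, ‖(T f).1 - (T g).1‖ = ‖f.1 - g.1‖) (y : Y) :
    ∃ x, ∀ f : PosCone X, (T f).1 y ≤ f.1 x := by
  classical
  let A : PosCone X → Set X := fun f => {x | (T f).1 y ≤ f.1 x}
  have hA : ∀ f, IsClosed (A f) := fun f =>
    isClosed_le continuous_const (map_continuous f.1)
  obtain ⟨w, hw1, -, -⟩ := exists_bump isOpen_univ (Set.mem_univ y)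
  obtain ⟨f₀, rfl⟩ := hsurj w
  have hc : IsCompact (A f₀) := by
    have hev : ∀ᶠ x in Filter.cocompact X, f₀.1 x < 1 :=
      (zero_at_infty f₀.1).eventually_lt_const one_pos
    obtain ⟨K, hK, hKs⟩ := Filter.mem_cocompact.1 hev
    refine hK.of_isClosed_subset (hA f₀) fun x hx => ?_
    by_contra hn
    have h1 : f₀.1 x < 1 := hKs hn
    have h2 : (T f₀).1 y ≤ f₀.1 x := hx
    linarith
  obtain ⟨x, -, hx⟩ := hc.inter_iInter_nonempty A hA fun u => by
    obtain ⟨x, hx⟩ := exists_point_finset hsurj hiso y (insert f₀ u)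
    exact ⟨x, hx f₀ (Finset.mem_insert_self _ _),
      Set.mem_iInter₂.2 fun f hf => hx f (Finset.mem_insert_of_mem hf)⟩
  exact ⟨x, fun f => Set.mem_iInter.1 hx f⟩

end Isometry

/-- The inequality of `exists_point` is an equality: the opposite one comes from applying it to
the inverse isometry. -/
theorem exists_point_eq {X Y : Type*}
    [TopologicalSpace X] [LocallyCompactSpace X] [T2Space X]
    [TopologicalSpace Y] [LocallyCompactSpace Y] [T2Space Y] (e : PosCone X ≃ PosCone Y)
    (hiso : ∀ f g : PosCone X, ‖(e f).1 - (e g).1‖ = ‖f.1 - g.1‖) (y : Y) :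
    ∃ x, ∀ f : PosCone X, (e f).1 y = f.1 x := by
  obtain ⟨x, hx⟩ := exists_point e.surjective hiso y
  obtain ⟨y', hy'⟩ := exists_point e.symm.surjective
    (fun f g => by rw [← hiso, e.apply_symm_apply, e.apply_symm_apply]) x
  have hle : ∀ f, f.1 x ≤ (e f).1 y' := fun f => by simpa using hy' (e f)
  have hyy : y = y' := eq_of_forall_le fun g => by
    obtain ⟨f, rfl⟩ := e.surjective g
    exact (hx f).trans (hle f)
  subst hyy
  exact ⟨x, fun f => le_antisymm (hx f) (hle f)⟩

end PosCone

/-! ### The homeomorphism -/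

theorem isometry_is_composition {X Y : Type*}
    [TopologicalSpace X] [LocallyCompactSpace X] [T2Space X]
    [TopologicalSpace Y] [LocallyCompactSpace Y] [T2Space Y]
    (T : PosCone X → PosCone Y)
    (hsurj : Function.Surjective T)
    (hiso : ∀ f g : PosCone X,
      ‖(T f : C₀(Y, ℝ)) - (T g : C₀(Y, ℝ))‖ = ‖(f : C₀(X, ℝ)) - (g : C₀(X, ℝ))‖) :
    ∃ φ : Y ≃ₜ X, ∀ (f : PosCone X) (y : Y), (T f : C₀(Y, ℝ)) y = (f : C₀(X, ℝ)) (φ y) := by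
  have hinj : Function.Injective T := fun f g h => by
    have := hiso f g
    rw [h, sub_self, norm_zero] at this
    exact Subtype.ext (sub_eq_zero.1 (norm_eq_zero.1 this.symm))
  let e : PosCone X ≃ PosCone Y := Equiv.ofBijective T ⟨hinj, hsurj⟩
  have hiso' : ∀ f g : PosCone Y, ‖(e.symm f).1 - (e.symm g).1‖ = ‖f.1 - g.1‖ := fun f g => by
    obtain ⟨f, rfl⟩ := e.surjective f
    obtain ⟨g, rfl⟩ := e.surjective g
    rw [e.symm_apply_apply, e.symm_apply_apply]
    exact (hiso f g).symm
  choose φ hφ using PosCone.exists_point_eq e hiso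
  choose ψ hψ using PosCone.exists_point_eq e.symm hiso'
  have hψ' : ∀ (x : X) (f : PosCone X), f.1 x = (e f).1 (ψ x) := fun x f => by
    rw [← hψ x (e f), e.symm_apply_apply]
  refine ⟨⟨⟨φ, ψ, fun y => ?_, fun x => ?_⟩, ?_, ?_⟩, fun f y => hφ y f⟩
  · refine PosCone.eq_of_forall_le fun g => ?_
    rw [← hψ, ← hφ, e.apply_symm_apply]
  · refine PosCone.eq_of_forall_le fun f => ?_
    rw [← hφ, ← hψ']
  · refine PosCone.continuous_of_comp fun f => ?_
    simp only [← hφ]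
    exact map_continuous (e f).1
  · refine PosCone.continuous_of_comp fun g => ?_
    simp only [← hψ]
    exact map_continuous (e.symm g).1
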